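/- (Sensitivity under needle-perturbation.) Let 0 < α ≤ 1, β > 0, R ≥ 0, and let φ : ℝⁿ×ℝⁿ → ℝ and L : ℝⁿ×ℝⁿ×[a,b] → ℝ be of class C². Let u : [a,b] → ℝⁿ be measurable with ‖u(s)‖ ≤ R for almost every s, let y ∈ ℝⁿ, and set x(t) := y + ∫_a^t ((t−s)^{α−1}/Γ(α)) u(s) ds and, for u' measurable essentially bounded, Φ(u') := φ(x'(a), x'(b)) + ∫_a^b ((b−s)^{β−1}/Γ(β)) L(x'(s), u'(s), s) ds where x'(t) := y + ∫_a^t ((t−s)^{α−1}/Γ(α)) u'(s) ds. Let τ ∈ (a,b) be a right Lebesgue point of both u and s ↦ L(x(s),u(s),s), i.e. lim_{h→0⁺} (1/h)∫_τ^{τ+h} ‖u(s) − u(τ)‖ ds = 0 and lim_{h→0⁺} (1/h)∫_τ^{τ+h} |L(x(s),u(s),s) − L(x(τ),u(τ),τ)| ds = 0, and let v ∈ ℝⁿ with ‖v‖ ≤ R. For 0 < h ≤ b−τ let u_h := v on [τ,τ+h) and u_h := u elsewhere. Then lim_{h→0⁺} ( Φ(u_h) − Φ(u) )/h = ((b−τ)^{β−1}/Γ(β))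 ( L(x(τ),v,τ) − L(x(τ),u(τ),τ) ) + [ ((b−τ)^{α−1}/Γ(α)) ∂₂φ(x(a),x(b)) + ∫_τ^b ((s−τ)^{α−1}/Γ(α)) ((b−s)^{β−1}/Γ(β)) ∂₁L(x(s),u(s),s) ds ] · (v − u(τ)). -/

import Mathlib

open MeasureTheory Set Filter Topology
open scoped RealInnerProductSpace

/-!
The change of cost caused by a needle of width `h` splits in two. On `[τ, τ + h]` the running cost
jumps from `L(x, u, s)` to `L(x, v, s)`, and the Lebesgue point turns the mean of this jump into its
value at `τ`; since `L` is Lipschitz on bounded sets, a Lebesgue point of the control is one of the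
running cost along any states converging to the state at `τ`. To the right of `τ` the state moves by
the integral of `(t - s) ^ (α - 1) / Γ(α) • (v - u s)` over the needle, whose difference quotient
tends to `(t - τ) ^ (α - 1) / Γ(α) • (v - u τ)`. By Bernoulli's inequality this quotient is at most
a constant times the same kernel, uniformly in `h`, so the endpoint cost is differentiated by the
chain rule and the running cost under the integral, the domination coming from the integrability on
`[τ, b]` of the product of the two kernels.
-/

section RightDerivative

variable {F : Type*} [NormedAddCommGroup F] [NormedSpace ℝ F]

lemma hasDerivWithinAt_Ioi_zero_iff_tendsto {f : ℝ → F} {f' : F} :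
    HasDerivWithinAt f f' (Ioi 0) 0 ↔
      Tendsto (fun h : ℝ => h⁻¹ • (f h - f 0)) (𝓝[>] 0) (𝓝 f') := by
  simp only [hasDerivWithinAt_iff_tendsto_slope' self_notMem_Ioi, slope_fun_def, vsub_eq_sub,
    sub_zero]

lemma eventually_pos_and_add_lt {τ c : ℝ} (hc : τ < c) :
    ∀ᶠ h in 𝓝[>] (0 : ℝ), 0 < h ∧ τ + h < c := by
  filter_upwards [Ioo_mem_nhdsGT (sub_pos.2 hc)] with h hh
  exact ⟨hh.1, lt_sub_iff_add_lt'.1 hh.2⟩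

lemma hasDerivWithinAt_integral_add_right [CompleteSpace F] {g : ℝ → F} {τ c : ℝ} (hc : τ < c)
    (hg : ContinuousOn g (Icc τ c)) :
    HasDerivWithinAt (fun h => ∫ s in τ..τ + h, g s) (g τ) (Ioi 0) 0 := by
  have hmem : Icc τ c ∈ 𝓝[>] τ := Icc_mem_nhdsGT hc
  have hprim : HasDerivWithinAt (fun t => ∫ s in τ..t, g s) (g τ) (Ioi τ) (τ + 0) := by
    rw [add_zero]
    exact (intervalIntegral.integral_hasDerivWithinAt_right (s := Ici τ) (t := Ioi τ) (by simp)
      ⟨_, hmem, hg.aestronglyMeasurable measurableSet_Icc⟩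
      ((hg τ (left_mem_Icc.2 hc.le)).mono_of_mem_nhdsWithin hmem)).mono Ioi_subset_Ici_self
  have hshift : HasDerivWithinAt (fun h : ℝ => τ + h) 1 (Ioi 0) 0 :=
    ((hasDerivAt_id (0 : ℝ)).const_add τ).hasDerivWithinAt
  have hmaps : MapsTo (fun h : ℝ => τ + h) (Ioi 0) (Ioi τ) := fun h hh =>
    lt_add_of_pos_right τ hh
  simpa only [Function.comp_def, one_smul] using hprim.scomp (0 : ℝ) hshift hmaps

lemma hasDerivWithinAt_integral_of_dominated_slope {Φ : ℝ → ℝ → F} {Φ' : ℝ → F} {bound : ℝ → ℝ}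
    {a b : ℝ} (hint : ∀ h, 0 ≤ h → IntervalIntegrable (Φ h) volume a b)
    (hdom : ∀ h, 0 < h → ∀ᵐ s ∂volume, s ∈ uIoc a b → ‖Φ h s - Φ 0 s‖ ≤ h * bound s)
    (hbound : IntervalIntegrable bound volume a b)
    (hderiv : ∀ s ∈ uIoc a b, HasDerivWithinAt (fun h => Φ h s) (Φ' s) (Ioi 0) 0) :
    HasDerivWithinAt (fun h => ∫ s in a..b, Φ h s) (∫ s in a..b, Φ' s) (Ioi 0) 0 := by
  rw [hasDerivWithinAt_Ioi_zero_iff_tendsto]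
  have hslope : Tendsto (fun h : ℝ => ∫ s in a..b, h⁻¹ • (Φ h s - Φ 0 s)) (𝓝[>] 0)
      (𝓝 (∫ s in a..b, Φ' s)) := by
    apply intervalIntegral.tendsto_integral_filter_of_dominated_convergence bound
    · filter_upwards [self_mem_nhdsWithin] with h hh
      have hdiff : IntervalIntegrable (fun s => Φ h s - Φ 0 s) volume a b :=
        (hint h (le_of_lt hh)).sub (hint 0 le_rfl)
      exact (hdiff.smul h⁻¹).aestronglyMeasurable_restrict_uIoc
    · filter_upwards [self_mem_nhdsWithin] with h (hh : 0 < h)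
      filter_upwards [hdom h hh] with s hs hsI
      rw [norm_smul, norm_inv, Real.norm_of_nonneg hh.le, inv_mul_le_iff₀ hh]
      exact hs hsI
    · exact hbound
    · exact Eventually.of_forall fun s hs => hasDerivWithinAt_Ioi_zero_iff_tendsto.1 (hderiv s hs)
  refine hslope.congr' ?_
  filter_upwards [self_mem_nhdsWithin] with h hh
  rw [intervalIntegral.integral_smul,
    intervalIntegral.integral_sub (hint h (le_of_lt hh)) (hint 0 le_rfl)]

end RightDerivative

section LebesguePoint

variable {F G : Type*} [NormedAddCommGroup F] [NormedAddCommGroup G]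

/-- The one-parameter family `f h` has the right Lebesgue limit `c` at `τ`: the mean of
`‖f h s - c‖` over `s ∈ [τ, τ + h]` tends to `0` as `h → 0⁺`. A right Lebesgue point of a single
function is the case of a constant family with `c = f τ`. Integrability is part of the definition,
since the Bochner integral of a nonintegrable function is `0`. -/
structure HasRightLebesgueLimit (f : ℝ → ℝ → F) (τ : ℝ) (c : F) : Prop where
  intervalIntegrable : ∀ᶠ h in 𝓝[>] (0 : ℝ), IntervalIntegrable (f h) volume τ (τ + h)
  tendsto_average :
    Tendsto (fun h : ℝ => h⁻¹ * ∫ s in τ..τ + h, ‖f h s - c‖) (𝓝[>] 0) (𝓝 0)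

namespace HasRightLebesgueLimit

variable {f : ℝ → ℝ → F} {g : ℝ → ℝ → G} {τ : ℝ} {c : F} {d : G}

lemma of_average_le {m : ℝ → ℝ}
    (hf : ∀ᶠ h in 𝓝[>] (0 : ℝ), IntervalIntegrable (f h) volume τ (τ + h))
    (hm : Tendsto m (𝓝[>] 0) (𝓝 0))
    (hle : ∀ᶠ h in 𝓝[>] (0 : ℝ), h⁻¹ * (∫ s in τ..τ + h, ‖f h s - c‖) ≤ m h) :
    HasRightLebesgueLimit f τ c := by
  refine ⟨hf, squeeze_zero' ?_ hle hm⟩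
  filter_upwards [self_mem_nhdsWithin] with h (hh : 0 < h)
  exact mul_nonneg (inv_nonneg.2 hh.le)
    (intervalIntegral.integral_nonneg (by linarith) fun s _ => norm_nonneg _)

lemma intervalIntegrable_norm_sub (hf : HasRightLebesgueLimit f τ c) :
    ∀ᶠ h in 𝓝[>] (0 : ℝ), IntervalIntegrable (fun s => ‖f h s - c‖) volume τ (τ + h) :=
  hf.intervalIntegrable.mono fun _ hh => (hh.sub intervalIntegrable_const).norm

lemma of_norm_sub_le {m : ℝ → ℝ}
    (hf : ∀ᶠ h in 𝓝[>] (0 : ℝ), IntervalIntegrable (f h) volume τ (τ + h))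
    (hm : Tendsto m (𝓝[>] τ) (𝓝 0))
    (hle : ∀ᶠ h in 𝓝[>] (0 : ℝ), ∀ s ∈ Ioc τ (τ + h), ‖f h s - c‖ ≤ m s) :
    HasRightLebesgueLimit f τ c := by
  refine ⟨hf, Metric.tendsto_nhds.2 fun ε hε => ?_⟩
  obtain ⟨e, he, hsmall⟩ := mem_nhdsGT_iff_exists_Ioo_subset.1
    (hm.eventually_lt_const (half_pos hε))
  filter_upwards [hle, eventually_pos_and_add_lt (mem_Ioi.1 he)] with h hle_h hh
  have hint : ‖∫ s in τ..τ + h, ‖f h s - c‖‖ ≤ ε / 2 * |τ + h - τ| := by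
    refine intervalIntegral.norm_integral_le_of_norm_le_const fun s hs => ?_
    rw [uIoc_of_le (by linarith)] at hs
    rw [norm_norm]
    exact (hle_h s hs).trans (le_of_lt (hsmall ⟨hs.1, hs.2.trans_lt hh.2⟩))
  rw [add_sub_cancel_left, abs_of_pos hh.1] at hint
  rw [dist_zero_right, norm_mul, norm_inv, Real.norm_of_nonneg hh.1.le]
  exact ((inv_mul_le_iff₀ hh.1).2 (hint.trans_eq (mul_comm _ _))).trans_lt (half_lt_self hε)

lemma const (c : F) (τ : ℝ) : HasRightLebesgueLimit (fun _ _ => c) τ c :=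
  of_norm_sub_le (m := 0) (by simp) tendsto_const_nhds (by simp)

lemma of_norm_sub_le_add (hf : HasRightLebesgueLimit f τ c) (hg : HasRightLebesgueLimit g τ d)
    {H : Type*} [NormedAddCommGroup H] {k : ℝ → ℝ → H} {e : H}
    (hk : ∀ᶠ h in 𝓝[>] (0 : ℝ), IntervalIntegrable (k h) volume τ (τ + h))
    (hle : ∀ h s, ‖k h s - e‖ ≤ ‖f h s - c‖ + ‖g h s - d‖) :
    HasRightLebesgueLimit k τ e := by
  refine of_average_le hk (by simpa using hf.tendsto_average.add hg.tendsto_average) ?_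
  filter_upwards [hk, hf.intervalIntegrable_norm_sub, hg.intervalIntegrable_norm_sub,
    self_mem_nhdsWithin] with h hk hf hg (hh : 0 < h)
  rw [← mul_add, ← intervalIntegral.integral_add hf hg]
  gcongr
  exact intervalIntegral.integral_mono_on (by linarith) (hk.sub intervalIntegrable_const).norm
    (hf.add hg) fun s _ => hle h s

lemma sub {g : ℝ → ℝ → F} {d : F} (hf : HasRightLebesgueLimit f τ c)
    (hg : HasRightLebesgueLimit g τ d) :
    HasRightLebesgueLimit (fun h s => f h s - g h s) τ (c - d) := by
  refine of_norm_sub_le_add hf hg ?_ fun h s => ?_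
  · filter_upwards [hf.intervalIntegrable, hg.intervalIntegrable] with h hf hg
    exact hf.sub hg
  · rw [sub_sub_sub_comm]
    exact norm_sub_le _ _

lemma prodMk (hf : HasRightLebesgueLimit f τ c) (hg : HasRightLebesgueLimit g τ d) :
    HasRightLebesgueLimit (fun h s => (f h s, g h s)) τ (c, d) := by
  refine of_norm_sub_le_add hf hg ?_ fun h s => ?_
  · filter_upwards [hf.intervalIntegrable, hg.intervalIntegrable] with h hf hg
    exact ⟨hf.1.prodMk hg.1, hf.2.prodMk hg.2⟩
  · exact max_le_add_of_nonneg (norm_nonneg _) (norm_nonneg _)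

lemma comp_lipschitzOnWith {Ψ : F → G} {K : NNReal} {S : Set F} (hΨ : LipschitzOnWith K Ψ S)
    (hc : c ∈ S) (hf : HasRightLebesgueLimit f τ c)
    (hfS : ∀ᶠ h in 𝓝[>] (0 : ℝ), ∀ᵐ s ∂volume, s ∈ Ioc τ (τ + h) → f h s ∈ S)
    (hint : ∀ᶠ h in 𝓝[>] (0 : ℝ), IntervalIntegrable (fun s => Ψ (f h s)) volume τ (τ + h)) :
    HasRightLebesgueLimit (fun h s => Ψ (f h s)) τ (Ψ c) := by
  refine of_average_le hint (by simpa using hf.tendsto_average.const_mul (K : ℝ)) ?_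
  filter_upwards [hfS, hint, hf.intervalIntegrable_norm_sub, self_mem_nhdsWithin]
    with h hS hint hf (hh : 0 < h)
  rw [mul_left_comm, ← intervalIntegral.integral_const_mul (K : ℝ)]
  refine mul_le_mul_of_nonneg_left ?_ (inv_nonneg.2 hh.le)
  refine intervalIntegral.integral_mono_ae_restrict (by linarith)
    (hint.sub intervalIntegrable_const).norm (hf.const_mul _) ?_
  rw [← Measure.restrict_congr_set Ioc_ae_eq_Icc, EventuallyLE,
    ae_restrict_iff' measurableSet_Ioc]
  filter_upwards [hS] with s hs hsI
  exact hΨ.norm_sub_le (hs hsI) hc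

lemma hasDerivWithinAt_integral_smul [NormedSpace ℝ F] [CompleteSpace F] {k : ℝ → ℝ} {b : ℝ}
    (hb : τ < b) (hk : ContinuousOn k (Icc τ b)) (hf : HasRightLebesgueLimit f τ c) :
    HasDerivWithinAt (fun h => ∫ s in τ..τ + h, k s • f h s) (k τ • c) (Ioi 0) 0 := by
  obtain ⟨M, hM⟩ := isCompact_Icc.exists_bound_of_continuousOn hk
  have hlead : Tendsto (fun h : ℝ => h⁻¹ • ∫ s in τ..τ + h, k s • c) (𝓝[>] 0) (𝓝 (k τ • c)) := by
    simpa using hasDerivWithinAt_Ioi_zero_iff_tendsto.1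
      (hasDerivWithinAt_integral_add_right (g := fun s => k s • c) hb (hk.smul continuousOn_const))
  have hrem : Tendsto (fun h : ℝ => h⁻¹ • ∫ s in τ..τ + h, k s • (f h s - c)) (𝓝[>] 0) (𝓝 0) := by
    refine squeeze_zero_norm' ?_ (by simpa using hf.tendsto_average.const_mul M)
    filter_upwards [eventually_pos_and_add_lt hb, hf.intervalIntegrable_norm_sub] with h hh hint
    rw [norm_smul, norm_inv, Real.norm_of_nonneg hh.1.le, mul_left_comm,
      ← intervalIntegral.integral_const_mul]
    refine mul_le_mul_of_nonneg_left ?_ (inv_nonneg.2 hh.1.le)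
    refine intervalIntegral.norm_integral_le_of_norm_le (by linarith)
      (Eventually.of_forall fun s hs => ?_) (hint.const_mul M)
    rw [norm_smul]
    exact mul_le_mul_of_nonneg_right (hM s ⟨hs.1.le, hs.2.trans hh.2.le⟩) (norm_nonneg _)
  rw [hasDerivWithinAt_Ioi_zero_iff_tendsto]
  refine (zero_add (k τ • c) ▸ hrem.add hlead).congr' ?_
  filter_upwards [eventually_pos_and_add_lt hb, hf.intervalIntegrable] with h hh hint
  have hkh : ContinuousOn k (uIcc τ (τ + h)) := by
    rw [uIcc_of_le (by linarith)]
    exact hk.mono (Icc_subset_Icc_right hh.2.le)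
  have hkc : IntervalIntegrable (fun s => k s • c) volume τ (τ + h) :=
    (hkh.smul continuousOn_const).intervalIntegrable
  rw [← smul_add, ← intervalIntegral.integral_add
    ((hint.sub intervalIntegrable_const).continuousOn_smul hkh) hkc]
  simp only [← smul_add, sub_add_cancel, add_zero, intervalIntegral.integral_same, sub_zero]

end HasRightLebesgueLimit

end LebesguePoint

section FracKernel

/-- The Riemann–Liouville kernel `t ^ (α - 1) / Γ(α)` of fractional integration of order `α`;
`fracKernel (α + 1)` is its primitive vanishing at `0`. -/
noncomputable def fracKernel (α t : ℝ) : ℝ :=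
  t ^ (α - 1) / Real.Gamma α

variable {α : ℝ}

lemma fracKernel_nonneg (hα : 0 ≤ α) {t : ℝ} (ht : 0 ≤ t) : 0 ≤ fracKernel α t :=
  div_nonneg (Real.rpow_nonneg ht _) (Real.Gamma_nonneg_of_nonneg hα)

lemma fracKernel_add_one (hα : α ≠ 0) (t : ℝ) :
    fracKernel (α + 1) t = t ^ α / (α * Real.Gamma α) := by
  rw [fracKernel, Real.Gamma_add_one hα, add_sub_cancel_right]

lemma fracKernel_add_one_zero (hα : α ≠ 0) : fracKernel (α + 1) 0 = 0 := by
  rw [fracKernel_add_one hα, Real.zero_rpow hα, zero_div]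

lemma continuous_fracKernel (hα : 1 ≤ α) : Continuous (fracKernel α) :=
  (Real.continuous_rpow_const (sub_nonneg.2 hα)).div_const _

lemma continuousOn_fracKernel (α : ℝ) : ContinuousOn (fracKernel α) (Ioi 0) := fun t ht =>
  ((Real.continuousAt_rpow_const t _ (.inl (ne_of_gt ht))).div_const _).continuousWithinAt

lemma antitoneOn_fracKernel (hα : 0 ≤ α) (hα1 : α ≤ 1) : AntitoneOn (fracKernel α) (Ioi 0) :=
  fun _ hs _ _ hst => div_le_div_of_nonneg_right
    (Real.rpow_le_rpow_of_nonpos hs hst (sub_nonpos.2 hα1)) (Real.Gamma_nonneg_of_nonneg hα)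

lemma monotoneOn_fracKernel (hα : 1 ≤ α) : MonotoneOn (fracKernel α) (Ici 0) :=
  fun _ hs _ _ hst => div_le_div_of_nonneg_right
    (Real.rpow_le_rpow hs hst (sub_nonneg.2 hα)) (Real.Gamma_nonneg_of_nonneg (by linarith))

lemma intervalIntegrable_fracKernel (hα : 0 < α) (c d : ℝ) :
    IntervalIntegrable (fracKernel α) volume c d :=
  (intervalIntegral.intervalIntegrable_rpow' (by linarith)).div_const _

lemma intervalIntegrable_fracKernel_sub_left (hα : 0 < α) (t c d : ℝ) :
    IntervalIntegrable (fun s => fracKernel α (t - s)) volume c d := by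
  simpa only [sub_sub_cancel] using
    (intervalIntegrable_fracKernel hα (t - c) (t - d)).comp_sub_left t

lemma intervalIntegrable_fracKernel_sub_right (hα : 0 < α) (t c d : ℝ) :
    IntervalIntegrable (fun s => fracKernel α (s - t)) volume c d := by
  simpa only [sub_add_cancel] using
    (intervalIntegrable_fracKernel hα (c - t) (d - t)).comp_sub_right t

lemma intervalIntegrable_fracKernel_mul_fracKernel {β : ℝ} (hα : 0 < α) (hβ : 0 < β) {c d : ℝ}
    (hcd : c < d) :
    IntervalIntegrable (fun s => fracKernel α (s - c) * fracKernel β (d - s)) volume c d := by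
  obtain ⟨m, hcm, hmd⟩ := exists_between hcd
  refine IntervalIntegrable.trans (b := m) ?_ ?_
  · refine (intervalIntegrable_fracKernel_sub_right hα c c m).mul_continuousOn ?_
    refine (continuousOn_fracKernel β).comp (by fun_prop) fun s hs => ?_
    rw [uIcc_of_le hcm.le] at hs
    exact sub_pos.2 (hs.2.trans_lt hmd)
  · refine (intervalIntegrable_fracKernel_sub_left hβ d m d).continuousOn_mul ?_
    refine (continuousOn_fracKernel α).comp (by fun_prop) fun s hs => ?_
    rw [uIcc_of_le hmd.le] at hs
    exact sub_pos.2 (hcm.trans_le hs.1)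

lemma integral_fracKernel_sub_left (hα : 0 < α) (t c d : ℝ) :
    ∫ s in c..d, fracKernel α (t - s) =
      fracKernel (α + 1) (t - c) - fracKernel (α + 1) (t - d) := by
  rw [intervalIntegral.integral_comp_sub_left (fracKernel α), fracKernel_add_one hα.ne',
    fracKernel_add_one hα.ne']
  simp only [fracKernel]
  rw [intervalIntegral.integral_div, integral_rpow (.inl (by linarith)), sub_add_cancel, div_div,
    sub_div]

lemma integral_abs_fracKernel_sub_fracKernel (hα : 0 < α) {a s t : ℝ} (has : a ≤ s)
    (hst : s ≤ t) :
    ∫ r in a..s, |fracKernel α (t - r) - fracKernel α (s - r)| =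
      |fracKernel (α + 1) (t - a) - fracKernel (α + 1) (t - s) - fracKernel (α + 1) (s - a)| := by
  have hvalue : ∫ r in a..s, (fracKernel α (t - r) - fracKernel α (s - r)) =
      fracKernel (α + 1) (t - a) - fracKernel (α + 1) (t - s) - fracKernel (α + 1) (s - a) := by
    rw [intervalIntegral.integral_sub (intervalIntegrable_fracKernel_sub_left hα t a s)
      (intervalIntegrable_fracKernel_sub_left hα s a s), integral_fracKernel_sub_left hα,
      integral_fracKernel_sub_left hα, sub_self, fracKernel_add_one_zero hα.ne', sub_zero]
  rw [← hvalue]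
  rcases le_total 1 α with h1 | h1
  · have hsign : EqOn (fun r => |fracKernel α (t - r) - fracKernel α (s - r)|)
        (fun r => fracKernel α (t - r) - fracKernel α (s - r)) (Ioo a s) := fun r hr =>
      abs_of_nonneg (sub_nonneg.2 (monotoneOn_fracKernel h1 (sub_nonneg.2 hr.2.le)
        (sub_nonneg.2 (hr.2.le.trans hst)) (sub_le_sub_right hst r)))
    rw [← intervalIntegral.integral_congr_Ioo_of_le has hsign, abs_of_nonneg]
    exact intervalIntegral.integral_nonneg has fun _ _ => abs_nonneg _
  · have hsign : EqOn (fun r => |fracKernel α (t - r) - fracKernel α (s - r)|)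
        (fun r => -(fracKernel α (t - r) - fracKernel α (s - r))) (Ioo a s) := fun r hr =>
      abs_of_nonpos (sub_nonpos.2 (antitoneOn_fracKernel hα.le h1 (sub_pos.2 hr.2)
        (sub_pos.2 (hr.2.trans_le hst)) (sub_le_sub_right hst r)))
    rw [← abs_neg, ← intervalIntegral.integral_neg,
      ← intervalIntegral.integral_congr_Ioo_of_le has hsign, abs_of_nonneg]
    exact intervalIntegral.integral_nonneg has fun _ _ => abs_nonneg _

lemma rpow_sub_rpow_sub_le (hα : 0 ≤ α) {σ δ : ℝ} (hσ : 0 < σ) (hδ : 0 ≤ δ) (hδσ : δ ≤ σ) :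
    σ ^ α - (σ - δ) ^ α ≤ δ * (max 1 α * σ ^ (α - 1)) := by
  have hq0 : 0 ≤ δ / σ := div_nonneg hδ hσ.le
  have hq1 : δ / σ ≤ 1 := (div_le_one hσ).2 hδσ
  have hbernoulli : 1 - max 1 α * (δ / σ) ≤ (1 - δ / σ) ^ α := calc
    1 - max 1 α * (δ / σ) = 1 + max 1 α * -(δ / σ) := by ring
    _ ≤ (1 + -(δ / σ)) ^ max 1 α :=
      one_add_mul_self_le_rpow_one_add (by linarith) (le_max_left _ _)
    _ ≤ (1 - δ / σ) ^ α := by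
      rw [← sub_eq_add_neg]
      exact Real.rpow_le_rpow_of_exponent_ge' (by linarith) (by linarith) hα (le_max_right _ _)
  have hfactor : (σ - δ) ^ α = σ ^ α * (1 - δ / σ) ^ α := by
    rw [← Real.mul_rpow hσ.le (by linarith), mul_sub, mul_one, mul_div_cancel₀ _ hσ.ne']
  calc σ ^ α - (σ - δ) ^ α = σ ^ α * (1 - (1 - δ / σ) ^ α) := by rw [hfactor]; ring
    _ ≤ σ ^ α * (max 1 α * (δ / σ)) := by gcongr; linarith
    _ = δ * (max 1 α * σ ^ (α - 1)) := by rw [Real.rpow_sub_one hσ.ne']; ring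

lemma integral_fracKernel_sub_left_le (hα : 0 < α) {τ m t : ℝ} (hτm : τ ≤ m) (hmt : m ≤ t)
    (hτt : τ < t) :
    ∫ s in τ..m, fracKernel α (t - s) ≤ (m - τ) * (max 1 α / α * fracKernel α (t - τ)) := by
  have hpow : (t - τ) ^ α - (t - m) ^ α ≤ (m - τ) * (max 1 α * (t - τ) ^ (α - 1)) := by
    simpa only [sub_sub_sub_cancel_right] using
      rpow_sub_rpow_sub_le hα.le (sub_pos.2 hτt) (sub_nonneg.2 hτm) (sub_le_sub_right hmt τ)
  have hΓ : 0 ≤ α * Real.Gamma α := mul_nonneg hα.le (Real.Gamma_nonneg_of_nonneg hα.le)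
  calc ∫ s in τ..m, fracKernel α (t - s)
      = ((t - τ) ^ α - (t - m) ^ α) / (α * Real.Gamma α) := by
        rw [integral_fracKernel_sub_left hα, fracKernel_add_one hα.ne', fracKernel_add_one hα.ne',
          sub_div]
    _ ≤ (m - τ) * (max 1 α * (t - τ) ^ (α - 1)) / (α * Real.Gamma α) :=
      div_le_div_of_nonneg_right hpow hΓ
    _ = (m - τ) * (max 1 α / α * fracKernel α (t - τ)) := by rw [fracKernel]; ring

end FracKernel

section EssentiallyBounded

variable {X E F : Type*} [NormedAddCommGroup E] [NormedAddCommGroup F]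

section

variable {mX : MeasurableSpace X} {μ : Measure X} {f : X → E} {g : X → F}

lemma memLp_top_prodMk (hf : MemLp f ⊤ μ) (hg : MemLp g ⊤ μ) :
    MemLp (fun s => (f s, g s)) ⊤ μ := by
  refine memLp_top_of_bound (hf.1.prodMk hg.1) (max (lpNorm f ⊤ μ) (lpNorm g ⊤ μ)) ?_
  filter_upwards [ae_le_lpNorm_exponent_top hf, ae_le_lpNorm_exponent_top hg] with s hfs hgs
  exact max_le_max hfs hgs

lemma memLp_top_continuous_comp [ProperSpace E] {G : E → F} (hG : Continuous G)
    (hf : MemLp f ⊤ μ) : MemLp (fun s => G (f s)) ⊤ μ := by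
  obtain ⟨C, hC⟩ := (isCompact_closedBall (0 : E) (lpNorm f ⊤ μ)).exists_bound_of_continuousOn
    hG.continuousOn
  refine memLp_top_of_bound (hG.comp_aestronglyMeasurable hf.1) C ?_
  filter_upwards [ae_le_lpNorm_exponent_top hf] with s hs
  exact hC _ (mem_closedBall_zero_iff.2 hs)

end

variable {a b c d : ℝ} {w : ℝ → E}

lemma memLp_top_of_continuousOn_Icc (hw : ContinuousOn w (Icc a b)) :
    MemLp w ⊤ (volume.restrict (Icc a b)) := by
  obtain ⟨C, hC⟩ := isCompact_Icc.exists_bound_of_continuousOn hw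
  exact memLp_top_of_bound (hw.aestronglyMeasurable measurableSet_Icc) C
    ((ae_restrict_iff' measurableSet_Icc).2 (Eventually.of_forall hC))

variable [NormedSpace ℝ E] {g : ℝ → ℝ}

lemma intervalIntegrable_smul_of_memLp_top (hw : MemLp w ⊤ (volume.restrict (Icc a b)))
    (hc : c ∈ Icc a b) (hd : d ∈ Icc a b) (hg : IntervalIntegrable g volume c d) :
    IntervalIntegrable (fun s => g s • w s) volume c d := by
  rw [intervalIntegrable_iff] at hg ⊢
  have hsub : uIoc c d ⊆ Icc a b := uIoc_subset_uIcc.trans (uIcc_subset_Icc hc hd)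
  exact Integrable.smul_of_top_left hg (hw.mono_measure (Measure.restrict_mono_set _ hsub))

lemma intervalIntegrable_of_memLp_top (hw : MemLp w ⊤ (volume.restrict (Icc a b)))
    (hc : c ∈ Icc a b) (hd : d ∈ Icc a b) : IntervalIntegrable w volume c d := by
  simpa only [one_smul] using
    intervalIntegrable_smul_of_memLp_top (g := fun _ => 1) hw hc hd intervalIntegrable_const

lemma norm_integral_smul_le_lpNorm_top_mul (hw : MemLp w ⊤ (volume.restrict (Icc a b)))
    (hac : a ≤ c) (hcd : c ≤ d) (hdb : d ≤ b) (hg : IntervalIntegrable g volume c d) :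
    ‖∫ s in c..d, g s • w s‖ ≤
      lpNorm w ⊤ (volume.restrict (Icc a b)) * ∫ s in c..d, |g s| := by
  rw [← intervalIntegral.integral_const_mul]
  refine intervalIntegral.norm_integral_le_of_norm_le hcd ?_ (hg.abs.const_mul _)
  filter_upwards [(ae_restrict_iff' measurableSet_Icc).1 (ae_le_lpNorm_exponent_top hw)]
    with s hws hs
  rw [norm_smul, mul_comm, Real.norm_eq_abs]
  exact mul_le_mul_of_nonneg_right (hws ⟨hac.trans hs.1.le, hs.2.trans hdb⟩) (abs_nonneg _)

end EssentiallyBounded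

section Needle

variable {E : Type*}

/-- The needle variation of `u` at `τ`: the control `u`, replaced by `v` on `[τ, τ + h)`. -/
noncomputable def needle (u : ℝ → E) (v : E) (τ h : ℝ) (s : ℝ) : E :=
  if τ ≤ s ∧ s < τ + h then v else u s

variable {u : ℝ → E} {v : E} {τ h : ℝ}

lemma needle_of_mem {s : ℝ} (hs : s ∈ Ico τ (τ + h)) : needle u v τ h s = v :=
  if_pos hs

lemma needle_of_notMem {s : ℝ} (hs : s ∉ Ico τ (τ + h)) : needle u v τ h s = u s :=
  if_neg hs

lemma needle_zero : needle u v τ 0 = u :=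
  funext fun _ => needle_of_notMem (by simp)

lemma memLp_top_needle [NormedAddCommGroup E] {μ : Measure ℝ} (hu : MemLp u ⊤ μ) (v : E) (τ h : ℝ) :
    MemLp (needle u v τ h) ⊤ μ := by
  classical
  have hpiecewise : needle u v τ h = (Ico τ (τ + h)).piecewise (fun _ => v) u := by
    ext s
    simp only [needle, piecewise, mem_Ico]
  rw [hpiecewise]
  exact MemLp.piecewise measurableSet_Ico (memLp_top_const v) (hu.restrict _)

lemma integral_needle_sub {F : Type*} [NormedAddCommGroup F] [NormedSpace ℝ F]
    (H : ℝ → E → F) {a t : ℝ} (haτ : a ≤ τ) (hτt : τ ≤ t) (hh : 0 ≤ h) :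
    ∫ s in a..t, (H s (needle u v τ h s) - H s (u s)) =
      ∫ s in τ..min t (τ + h), (H s v - H s (u s)) := by
  have hindicator : (fun s => H s (needle u v τ h s) - H s (u s)) =
      (Ico τ (τ + h)).indicator fun s => H s v - H s (u s) := by
    ext s
    by_cases hs : s ∈ Ico τ (τ + h)
    · rw [indicator_of_mem hs, needle_of_mem hs]
    · rw [indicator_of_notMem hs, needle_of_notMem hs, sub_self]
  have hset : (Ioc a t ∩ Ico τ (τ + h) : Set ℝ) =ᵐ[volume] Ioc τ (min t (τ + h)) := by
    have hinter := (ae_eq_refl (Ioc a t)).inter (Ico_ae_eq_Ioc (μ := volume) (a := τ) (b := τ + h))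
    rwa [Ioc_inter_Ioc, max_eq_right haτ] at hinter
  rw [intervalIntegral.integral_of_le (haτ.trans hτt), hindicator,
    setIntegral_indicator measurableSet_Ico, setIntegral_congr_set hset,
    intervalIntegral.integral_of_le (le_min hτt (by linarith))]

end Needle

section FracState

variable {E : Type*} [NormedAddCommGroup E] [NormedSpace ℝ E]

/-- The state with initial value `y` at `a` whose Caputo derivative of order `α` is `w`, written as
`y` plus the Riemann–Liouville integral of `w`. -/
noncomputable def fracState (α a : ℝ) (y : E) (w : ℝ → E) (t : ℝ) : E :=
  y + ∫ s in a..t, fracKernel α (t - s) • w s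

variable {α a b τ s t h : ℝ} {y v : E} {u w : ℝ → E}

lemma fracState_left : fracState α a y w a = y := by
  rw [fracState, intervalIntegral.integral_same, add_zero]

lemma fracState_sub_fracState (hα : 0 < α) (hw : MemLp w ⊤ (volume.restrict (Icc a b)))
    (has : a ≤ s) (hst : s ≤ t) (htb : t ≤ b) :
    fracState α a y w t - fracState α a y w s = (∫ r in s..t, fracKernel α (t - r) • w r) +
      ∫ r in a..s, (fracKernel α (t - r) - fracKernel α (s - r)) • w r := by
  have ha : a ∈ Icc a b := ⟨le_rfl, has.trans (hst.trans htb)⟩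
  have hs : s ∈ Icc a b := ⟨has, hst.trans htb⟩
  have ht : t ∈ Icc a b := ⟨has.trans hst, htb⟩
  have hint {c d : ℝ} (hc : c ∈ Icc a b) (hd : d ∈ Icc a b) (r : ℝ) :
      IntervalIntegrable (fun q => fracKernel α (r - q) • w q) volume c d :=
    intervalIntegrable_smul_of_memLp_top hw hc hd (intervalIntegrable_fracKernel_sub_left hα r c d)
  simp only [fracState, sub_smul]
  rw [← intervalIntegral.integral_add_adjacent_intervals (hint ha hs t) (hint hs ht t),
    intervalIntegral.integral_sub (hint ha hs t) (hint ha hs s)]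
  abel

lemma norm_fracState_sub_le (hα : 0 < α) (hw : MemLp w ⊤ (volume.restrict (Icc a b)))
    (hs : s ∈ Icc a b) (ht : t ∈ Icc a b) :
    ‖fracState α a y w t - fracState α a y w s‖ ≤ lpNorm w ⊤ (volume.restrict (Icc a b)) *
      (2 * fracKernel (α + 1) |t - s| +
        |fracKernel (α + 1) (t - a) - fracKernel (α + 1) (s - a)|) := by
  wlog hst : s ≤ t generalizing s t
  · simpa only [norm_sub_rev, abs_sub_comm] using this ht hs (le_of_not_ge hst)
  have hlate : ∫ r in s..t, |fracKernel α (t - r)| = fracKernel (α + 1) (t - s) := by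
    rw [intervalIntegral.integral_congr_Ioo_of_le hst fun r hr =>
        abs_of_nonneg (fracKernel_nonneg hα.le (sub_nonneg.2 hr.2.le)),
      integral_fracKernel_sub_left hα, sub_self, fracKernel_add_one_zero hα.ne', sub_zero]
  have hearly : ∫ r in a..s, |fracKernel α (t - r) - fracKernel α (s - r)| ≤
      fracKernel (α + 1) (t - s) + |fracKernel (α + 1) (t - a) - fracKernel (α + 1) (s - a)| := by
    rw [integral_abs_fracKernel_sub_fracKernel hα hs.1 hst, sub_right_comm]
    refine (abs_sub _ _).trans_eq ?_
    rw [abs_of_nonneg (fracKernel_nonneg (by linarith) (sub_nonneg.2 hst))]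
    exact add_comm _ _
  have hker := intervalIntegrable_fracKernel_sub_left hα
  rw [fracState_sub_fracState hα hw hs.1 hst ht.2, abs_of_nonneg (sub_nonneg.2 hst)]
  calc _ ≤ lpNorm w ⊤ (volume.restrict (Icc a b)) * (∫ r in s..t, |fracKernel α (t - r)|) +
        lpNorm w ⊤ (volume.restrict (Icc a b)) *
          ∫ r in a..s, |fracKernel α (t - r) - fracKernel α (s - r)| :=
      norm_add_le_of_le (norm_integral_smul_le_lpNorm_top_mul hw hs.1 hst ht.2 (hker t s t))
        (norm_integral_smul_le_lpNorm_top_mul hw le_rfl hs.1 hs.2 ((hker t a s).sub (hker s a s)))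
    _ ≤ _ := by
      rw [← mul_add, hlate, two_mul, add_assoc]
      exact mul_le_mul_of_nonneg_left (add_le_add_right hearly _) lpNorm_nonneg

lemma continuousOn_fracState (hα : 0 < α) (hw : MemLp w ⊤ (volume.restrict (Icc a b))) :
    ContinuousOn (fracState α a y w) (Icc a b) := by
  intro s hs
  have hprim : Continuous (fracKernel (α + 1)) := continuous_fracKernel (by linarith)
  have hmodulus : Tendsto (fun t => lpNorm w ⊤ (volume.restrict (Icc a b)) *
      (2 * fracKernel (α + 1) |t - s| +
        |fracKernel (α + 1) (t - a) - fracKernel (α + 1) (s - a)|)) (𝓝[Icc a b] s) (𝓝 0) := by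
    refine Tendsto.mono_left (Continuous.tendsto' (by fun_prop) _ _ ?_) nhdsWithin_le_nhds
    simp only [sub_self, abs_zero, fracKernel_add_one_zero hα.ne', mul_zero, add_zero]
  rw [ContinuousWithinAt, tendsto_iff_norm_sub_tendsto_zero]
  refine squeeze_zero' (Eventually.of_forall fun _ => norm_nonneg _) ?_ hmodulus
  filter_upwards [self_mem_nhdsWithin] with t ht
  exact norm_fracState_sub_le hα hw hs ht

lemma fracState_needle_of_le (hat : a ≤ t) (htτ : t ≤ τ) :
    fracState α a y (needle u v τ h) t = fracState α a y u t := by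
  refine congrArg (y + ·) (intervalIntegral.integral_congr_Ioo_of_le hat fun s hs => ?_)
  exact congrArg (fracKernel α (t - s) • ·)
    (needle_of_notMem fun hmem => (hs.2.trans_le htτ).not_ge hmem.1)

lemma fracState_needle_sub (hα : 0 < α) (hu : MemLp u ⊤ (volume.restrict (Icc a b)))
    (haτ : a ≤ τ) (hτt : τ ≤ t) (htb : t ≤ b) (hh : 0 ≤ h) :
    fracState α a y (needle u v τ h) t - fracState α a y u t =
      ∫ s in τ..min t (τ + h), fracKernel α (t - s) • (v - u s) := by
  have ha : a ∈ Icc a b := ⟨le_rfl, haτ.trans (hτt.trans htb)⟩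
  have ht : t ∈ Icc a b := ⟨haτ.trans hτt, htb⟩
  have hint {w : ℝ → E} (hw : MemLp w ⊤ (volume.restrict (Icc a b))) :
      IntervalIntegrable (fun s => fracKernel α (t - s) • w s) volume a t :=
    intervalIntegrable_smul_of_memLp_top hw ha ht (intervalIntegrable_fracKernel_sub_left hα t a t)
  simp only [fracState, add_sub_add_left_eq_sub, smul_sub]
  rw [← intervalIntegral.integral_sub (hint (memLp_top_needle hu v τ h)) (hint hu)]
  exact integral_needle_sub (fun s z => fracKernel α (t - s) • z) haτ hτt hh

lemma norm_fracState_needle_sub_le (hα : 0 < α) (hu : MemLp u ⊤ (volume.restrict (Icc a b)))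
    (haτ : a ≤ τ) (hτt : τ ≤ t) (htb : t ≤ b) (hh : 0 ≤ h) :
    ‖fracState α a y (needle u v τ h) t - fracState α a y u t‖ ≤
      lpNorm (fun s => v - u s) ⊤ (volume.restrict (Icc a b)) *
        ∫ s in τ..min t (τ + h), fracKernel α (t - s) := by
  have hτmin : τ ≤ min t (τ + h) := le_min hτt (by linarith)
  rw [fracState_needle_sub hα hu haτ hτt htb hh,
    ← intervalIntegral.integral_congr_Ioo_of_le hτmin fun s hs => abs_of_nonneg
      (fracKernel_nonneg hα.le (sub_nonneg.2 (hs.2.le.trans (min_le_left t (τ + h)))))]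
  exact norm_integral_smul_le_lpNorm_top_mul ((memLp_top_const v).sub hu) haτ hτmin
    ((min_le_left _ _).trans htb) (intervalIntegrable_fracKernel_sub_left hα _ _ _)

lemma norm_fracState_needle_sub_le_fracKernel_add_one (hα : 0 < α)
    (hu : MemLp u ⊤ (volume.restrict (Icc a b))) (haτ : a ≤ τ) (hτt : τ ≤ t) (htb : t ≤ b)
    (hh : 0 ≤ h) :
    ‖fracState α a y (needle u v τ h) t - fracState α a y u t‖ ≤
      lpNorm (fun s => v - u s) ⊤ (volume.restrict (Icc a b)) * fracKernel (α + 1) (t - τ) := by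
  refine (norm_fracState_needle_sub_le hα hu haτ hτt htb hh).trans
    (mul_le_mul_of_nonneg_left ?_ lpNorm_nonneg)
  rw [integral_fracKernel_sub_left hα]
  exact sub_le_self _ (fracKernel_nonneg (by linarith) (sub_nonneg.2 (min_le_left _ _)))

lemma norm_fracState_needle_sub_le_mul (hα : 0 < α)
    (hu : MemLp u ⊤ (volume.restrict (Icc a b))) (haτ : a ≤ τ) (hτt : τ < t) (htb : t ≤ b)
    (hh : 0 ≤ h) :
    ‖fracState α a y (needle u v τ h) t - fracState α a y u t‖ ≤
      h * (lpNorm (fun s => v - u s) ⊤ (volume.restrict (Icc a b)) *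
        (max 1 α / α * fracKernel α (t - τ))) := by
  rw [mul_left_comm]
  refine (norm_fracState_needle_sub_le hα hu haτ hτt.le htb hh).trans
    (mul_le_mul_of_nonneg_left ?_ lpNorm_nonneg)
  refine (integral_fracKernel_sub_left_le hα (le_min hτt.le (by linarith)) (min_le_left _ _)
    hτt).trans ?_
  have hker : 0 ≤ fracKernel α (t - τ) := fracKernel_nonneg hα.le (sub_nonneg.2 hτt.le)
  gcongr
  exact sub_le_iff_le_add'.2 (min_le_right _ _)

lemma hasDerivWithinAt_fracState_needle [CompleteSpace E] (hα : 0 < α)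
    (hu : MemLp u ⊤ (volume.restrict (Icc a b))) {u₀ : E}
    (hLeb : HasRightLebesgueLimit (fun _ => u) τ u₀) (haτ : a ≤ τ) (hτt : τ < t) (htb : t ≤ b) :
    HasDerivWithinAt (fun h => fracState α a y (needle u v τ h) t)
      (fracKernel α (t - τ) • (v - u₀)) (Ioi 0) 0 := by
  obtain ⟨m, hτm, hmt⟩ := exists_between hτt
  have hker : ContinuousOn (fun s => fracKernel α (t - s)) (Icc τ m) :=
    (continuousOn_fracKernel α).comp (by fun_prop) fun s hs => sub_pos.2 (hs.2.trans_lt hmt)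
  have hderiv := (((HasRightLebesgueLimit.const v τ).sub hLeb).hasDerivWithinAt_integral_smul
    hτm hker).const_add (fracState α a y u t)
  refine hderiv.congr_of_eventuallyEq ?_ (by simp [needle_zero])
  filter_upwards [eventually_pos_and_add_lt hτt] with h hh
  rw [← sub_eq_iff_eq_add', fracState_needle_sub hα hu haτ hτt.le htb hh.1.le,
    min_eq_right hh.2.le]

end FracState

section Gradient

variable {E P : Type*} [NormedAddCommGroup E] [InnerProductSpace ℝ E] [CompleteSpace E]

lemma hasDerivWithinAt_comp_gradient {f : E → ℝ} {γ : ℝ → E} {γ' : E} {S : Set ℝ} {t : ℝ}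
    (hf : DifferentiableAt ℝ f (γ t)) (hγ : HasDerivWithinAt γ γ' S t) :
    HasDerivWithinAt (fun h => f (γ h)) ⟪gradient f (γ t), γ'⟫ S t := by
  rw [inner_gradient_left]
  exact hf.hasFDerivAt.comp_hasDerivWithinAt t hγ

lemma continuous_gradient_fst [NormedAddCommGroup P] [NormedSpace ℝ P] {L : E × P → ℝ}
    (hL : ContDiff ℝ 1 L) : Continuous fun p : E × P => gradient (fun z => L (z, p.2)) p.1 := by
  have hpartial (p : E × P) : fderiv ℝ (fun z => L (z, p.2)) p.1 =
      (fderiv ℝ L p).comp (ContinuousLinearMap.inl ℝ E P) :=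
    ((hL.differentiable one_ne_zero p).hasFDerivAt.comp p.1
      (hasFDerivAt_prodMk_left p.1 p.2)).fderiv
  simp only [gradient, hpartial]
  exact (InnerProductSpace.toDual ℝ E).symm.continuous.comp
    ((hL.continuous_fderiv one_ne_zero).clm_comp continuous_const)

lemma intervalIntegral_inner_const {f : ℝ → E} {a b : ℝ} (hf : IntervalIntegrable f volume a b)
    (d : E) : ∫ s in a..b, ⟪f s, d⟫ = ⟪∫ s in a..b, f s, d⟫ := by
  simpa only [innerSL_apply_apply, real_inner_comm] using
    (innerSL ℝ d).intervalIntegral_comp_comm hf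

end Gradient

section Lagrangian

variable {E : Type*} [NormedAddCommGroup E]

lemma exists_lipschitzOnWith_closedBall [NormedSpace ℝ E] [ProperSpace E] {f : E → ℝ}
    (hf : ContDiff ℝ 1 f) (ρ : ℝ) : ∃ C, LipschitzOnWith C f (Metric.closedBall 0 ρ) :=
  LocallyLipschitzOn.exists_lipschitzOnWith_of_compact (isCompact_closedBall 0 ρ)
    hf.locallyLipschitz.locallyLipschitzOn

section

variable [NormedSpace ℝ E] {α a b τ : ℝ} {y v : E} {u w : ℝ → E}

lemma memLp_top_fracState_prodMk (hα : 0 < α) {w' : ℝ → E}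
    (hw : MemLp w ⊤ (volume.restrict (Icc a b))) (hw' : MemLp w' ⊤ (volume.restrict (Icc a b))) :
    MemLp (fun s => (fracState α a y w s, w' s, s)) ⊤ (volume.restrict (Icc a b)) :=
  memLp_top_prodMk (memLp_top_of_continuousOn_Icc (continuousOn_fracState hα hw))
    (memLp_top_prodMk hw' (memLp_top_of_continuousOn_Icc continuousOn_id))

lemma exists_forall_ae_mem_closedBall_needle (hα : 0 < α)
    (hu : MemLp u ⊤ (volume.restrict (Icc a b))) (hw : MemLp w ⊤ (volume.restrict (Icc a b)))
    (haτ : a ≤ τ) :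
    ∃ ρ, ∀ h, 0 ≤ h → ∀ᵐ s ∂volume, s ∈ Icc τ b →
      (fracState α a y (needle u v τ h) s, w s, s) ∈ Metric.closedBall (0 : E × E × ℝ) ρ := by
  set M := lpNorm (fun s => v - u s) ⊤ (volume.restrict (Icc a b))
  have hproc := memLp_top_fracState_prodMk (y := y) hα hu hw
  refine ⟨lpNorm (fun s => (fracState α a y u s, w s, s)) ⊤ (volume.restrict (Icc a b)) +
    M * fracKernel (α + 1) (b - τ), fun h hh => ?_⟩
  filter_upwards [(ae_restrict_iff' measurableSet_Icc).1 (ae_le_lpNorm_exponent_top hproc)]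
    with s hs hsI
  have hdiff : ‖fracState α a y (needle u v τ h) s - fracState α a y u s‖ ≤
      M * fracKernel (α + 1) (b - τ) :=
    (norm_fracState_needle_sub_le_fracKernel_add_one hα hu haτ hsI.1 hsI.2 hh).trans
      (mul_le_mul_of_nonneg_left (monotoneOn_fracKernel (by linarith) (sub_nonneg.2 hsI.1)
        (sub_nonneg.2 (hsI.1.trans hsI.2)) (sub_le_sub_right hsI.2 τ)) lpNorm_nonneg)
  rw [mem_closedBall_zero_iff]
  refine (norm_le_norm_add_norm_sub _ _).trans (add_le_add (hs ⟨haτ.trans hsI.1, hsI.2⟩) ?_)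
  rwa [norm_sub_rev, ← dist_eq_norm, dist_prod_same_right, dist_eq_norm]

lemma hasRightLebesgueLimit_fracState_needle (hα : 0 < α)
    (hu : MemLp u ⊤ (volume.restrict (Icc a b))) (haτ : a ≤ τ) (hτb : τ < b) :
    HasRightLebesgueLimit (fun h => fracState α a y (needle u v τ h)) τ
      (fracState α a y u τ) := by
  set M := lpNorm (fun s => v - u s) ⊤ (volume.restrict (Icc a b))
  have hτ : τ ∈ Icc a b := ⟨haτ, hτb.le⟩
  have hstate : Tendsto (fun s => ‖fracState α a y u s - fracState α a y u τ‖) (𝓝[>] τ)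
      (𝓝 0) := by
    refine tendsto_iff_norm_sub_tendsto_zero.1
      (((continuousOn_fracState hα hu) τ hτ).mono_of_mem_nhdsWithin ?_)
    exact mem_of_superset (Ioo_mem_nhdsGT hτb) fun s hs => ⟨haτ.trans hs.1.le, hs.2.le⟩
  have hker : Tendsto (fun s => M * fracKernel (α + 1) (s - τ)) (𝓝[>] τ) (𝓝 0) := by
    have hcont : Continuous (fracKernel (α + 1)) := continuous_fracKernel (by linarith)
    refine Tendsto.mono_left (Continuous.tendsto' (by fun_prop) _ _ ?_) nhdsWithin_le_nhds
    rw [sub_self, fracKernel_add_one_zero hα.ne', mul_zero]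
  refine .of_norm_sub_le ?_ (zero_add (0 : ℝ) ▸ hker.add hstate) ?_
  · filter_upwards [eventually_pos_and_add_lt hτb] with h hh
    exact intervalIntegrable_of_memLp_top (memLp_top_of_continuousOn_Icc
      (continuousOn_fracState hα (memLp_top_needle hu v τ h))) hτ
      ⟨haτ.trans (by linarith), hh.2.le⟩
  · filter_upwards [eventually_pos_and_add_lt hτb] with h hh s hs
    exact (norm_sub_le_norm_sub_add_norm_sub _ (fracState α a y u s) _).trans (add_le_add_left
      (norm_fracState_needle_sub_le_fracKernel_add_one hα hu haτ hs.1.le (hs.2.trans hh.2.le)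
        hh.1.le) _)

variable [ProperSpace E] {β : ℝ} {L : E × E × ℝ → ℝ}

lemma intervalIntegrable_fracKernel_mul_lagrangian {c d : ℝ} {w w' : ℝ → E} (hL : Continuous L)
    (hα : 0 < α) (hβ : 0 < β) (hw : MemLp w ⊤ (volume.restrict (Icc a b)))
    (hw' : MemLp w' ⊤ (volume.restrict (Icc a b))) (hc : c ∈ Icc a b) (hd : d ∈ Icc a b) :
    IntervalIntegrable (fun s => fracKernel β (b - s) * L (fracState α a y w s, w' s, s))
      volume c d :=
  intervalIntegrable_smul_of_memLp_top
    (memLp_top_continuous_comp hL (memLp_top_fracState_prodMk hα hw hw')) hc hd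
    (intervalIntegrable_fracKernel_sub_left hβ b c d)

lemma exists_forall_ae_abs_lagrangian_needle_sub_le (hL : ContDiff ℝ 1 L) (hα : 0 < α)
    (hu : MemLp u ⊤ (volume.restrict (Icc a b))) (haτ : a ≤ τ) :
    ∃ C, ∀ h, 0 ≤ h → ∀ᵐ s ∂volume, s ∈ Ioc τ b →
      |L (fracState α a y (needle u v τ h) s, u s, s) - L (fracState α a y u s, u s, s)| ≤
        h * (C * fracKernel α (s - τ)) := by
  obtain ⟨ρ, hρ⟩ := exists_forall_ae_mem_closedBall_needle (y := y) (v := v) hα hu hu haτ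
  obtain ⟨K, hK⟩ := exists_lipschitzOnWith_closedBall hL ρ
  refine ⟨K * (lpNorm (fun s => v - u s) ⊤ (volume.restrict (Icc a b)) * (max 1 α / α)),
    fun h hh => ?_⟩
  filter_upwards [hρ h hh, hρ 0 le_rfl] with s hs hs0 hsI
  rw [needle_zero] at hs0
  have hlip := hK.dist_le_mul _ (hs (Ioc_subset_Icc_self hsI)) _ (hs0 (Ioc_subset_Icc_self hsI))
  rw [Real.dist_eq, dist_prod_same_right, dist_eq_norm] at hlip
  refine (hlip.trans (mul_le_mul_of_nonneg_left
    (norm_fracState_needle_sub_le_mul hα hu haτ hsI.1 hsI.2 hh) K.2)).trans_eq ?_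
  ring

lemma hasRightLebesgueLimit_lagrangian_needle (hL : ContDiff ℝ 1 L) (hα : 0 < α)
    (hu : MemLp u ⊤ (volume.restrict (Icc a b)))
    (hw : MemLp w ⊤ (volume.restrict (Icc a b))) {w₀ : E}
    (hLeb : HasRightLebesgueLimit (fun _ => w) τ w₀) (haτ : a ≤ τ) (hτb : τ < b) :
    HasRightLebesgueLimit (fun h s => L (fracState α a y (needle u v τ h) s, w s, s)) τ
      (L (fracState α a y u τ, w₀, τ)) := by
  obtain ⟨ρ, hρ⟩ := exists_forall_ae_mem_closedBall_needle (y := y) (v := v) hα hu hw haτ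
  obtain ⟨C, hC⟩ := exists_lipschitzOnWith_closedBall hL
    (max ρ ‖(fracState α a y u τ, w₀, τ)‖)
  have htime : HasRightLebesgueLimit (fun _ s : ℝ => s) τ τ :=
    .of_norm_sub_le (.of_forall fun _ => continuous_id.intervalIntegrable _ _)
      (tendsto_iff_norm_sub_tendsto_zero.1 (nhdsWithin_le_nhds (a := τ)))
      (.of_forall fun _ _ _ => le_rfl)
  refine ((hasRightLebesgueLimit_fracState_needle hα hu haτ hτb).prodMk
    (hLeb.prodMk htime)).comp_lipschitzOnWith hC
    (mem_closedBall_zero_iff.2 (le_max_right _ _)) ?_ ?_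
  · filter_upwards [eventually_pos_and_add_lt hτb] with h hh
    filter_upwards [hρ h hh.1.le] with s hs hsI
    exact Metric.closedBall_subset_closedBall (le_max_left _ _)
      (hs ⟨hsI.1.le, hsI.2.trans hh.2.le⟩)
  · filter_upwards [eventually_pos_and_add_lt hτb] with h hh
    exact intervalIntegrable_of_memLp_top (memLp_top_continuous_comp hL.continuous
      (memLp_top_fracState_prodMk hα (memLp_top_needle hu v τ h) hw)) ⟨haτ, hτb.le⟩
      ⟨haτ.trans (by linarith), hh.2.le⟩

lemma hasDerivWithinAt_integral_lagrangian_sub_lagrangian (hL : ContDiff ℝ 1 L) (hα : 0 < α)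
    (hu : MemLp u ⊤ (volume.restrict (Icc a b))) {u₀ : E}
    (hLeb : HasRightLebesgueLimit (fun _ => u) τ u₀) (haτ : a ≤ τ) (hτb : τ < b) :
    HasDerivWithinAt (fun h => ∫ s in τ..τ + h, fracKernel β (b - s) *
        (L (fracState α a y (needle u v τ h) s, v, s) -
          L (fracState α a y (needle u v τ h) s, u s, s)))
      (fracKernel β (b - τ) * (L (fracState α a y u τ, v, τ) - L (fracState α a y u τ, u₀, τ)))
      (Ioi 0) 0 := by
  obtain ⟨m, hτm, hmb⟩ := exists_between hτb
  have hker : ContinuousOn (fun s => fracKernel β (b - s)) (Icc τ m) :=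
    (continuousOn_fracKernel β).comp (by fun_prop) fun s hs => sub_pos.2 (hs.2.trans_lt hmb)
  exact ((hasRightLebesgueLimit_lagrangian_needle hL hα hu (memLp_top_const v) (.const v τ)
    haτ hτb).sub (hasRightLebesgueLimit_lagrangian_needle hL hα hu hu hLeb haτ
      hτb)).hasDerivWithinAt_integral_smul hτm hker

end

variable [InnerProductSpace ℝ E] [ProperSpace E] {α β a b τ : ℝ} {y v : E} {u : ℝ → E}
  {L : E × E × ℝ → ℝ}

lemma hasDerivWithinAt_integral_lagrangian_needle_of_left (hL : ContDiff ℝ 1 L) (hα : 0 < α)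
    (hβ : 0 < β) (hu : MemLp u ⊤ (volume.restrict (Icc a b))) {u₀ : E}
    (hLeb : HasRightLebesgueLimit (fun _ => u) τ u₀) (haτ : a ≤ τ) (hτb : τ < b) :
    HasDerivWithinAt (fun h => ∫ s in τ..b, fracKernel β (b - s) *
        L (fracState α a y (needle u v τ h) s, u s, s))
      ⟪∫ s in τ..b, (fracKernel α (s - τ) * fracKernel β (b - s)) •
        gradient (fun z => L (z, u s, s)) (fracState α a y u s), v - u₀⟫ (Ioi 0) 0 := by
  have hτ : τ ∈ Icc a b := ⟨haτ, hτb.le⟩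
  have hb : b ∈ Icc a b := ⟨haτ.trans hτb.le, le_rfl⟩
  have hkernels := intervalIntegrable_fracKernel_mul_fracKernel hα hβ hτb
  obtain ⟨C, hC⟩ := exists_forall_ae_abs_lagrangian_needle_sub_le (y := y) (v := v) hL hα hu haτ
  rw [← intervalIntegral_inner_const (intervalIntegrable_smul_of_memLp_top
    (memLp_top_continuous_comp (continuous_gradient_fst hL) (memLp_top_fracState_prodMk hα hu hu))
    hτ hb hkernels)]
  refine hasDerivWithinAt_integral_of_dominated_slope
    (bound := fun s => C * (fracKernel α (s - τ) * fracKernel β (b - s)))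
    (fun h _ => intervalIntegrable_fracKernel_mul_lagrangian hL.continuous hα hβ
      (memLp_top_needle hu v τ h) hu hτ hb) (fun h hh => ?_) (hkernels.const_mul C) ?_
  · filter_upwards [hC h hh.le] with s hs hsI
    rw [uIoc_of_le hτb.le] at hsI
    have hker : 0 ≤ fracKernel β (b - s) := fracKernel_nonneg hβ.le (sub_nonneg.2 hsI.2)
    rw [needle_zero, ← mul_sub, norm_mul, Real.norm_of_nonneg hker, Real.norm_eq_abs]
    refine (mul_le_mul_of_nonneg_left (hs hsI) hker).trans_eq ?_
    ring
  · intro s hsI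
    rw [uIoc_of_le hτb.le] at hsI
    have hdiff : Differentiable ℝ fun z => L (z, u s, s) :=
      (hL.differentiable one_ne_zero).comp (by fun_prop)
    have hderiv := (hasDerivWithinAt_comp_gradient (hdiff _)
      (hasDerivWithinAt_fracState_needle (y := y) (v := v) hα hu hLeb haτ hsI.1 hsI.2)).const_mul
      (fracKernel β (b - s))
    rw [needle_zero] at hderiv
    rwa [real_inner_smul_left, mul_comm (fracKernel α _), mul_assoc, ← real_inner_smul_right]

lemma hasDerivWithinAt_integral_lagrangian_needle (hL : ContDiff ℝ 1 L) (hα : 0 < α)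
    (hβ : 0 < β) (hu : MemLp u ⊤ (volume.restrict (Icc a b))) {u₀ : E}
    (hLeb : HasRightLebesgueLimit (fun _ => u) τ u₀) (haτ : a ≤ τ) (hτb : τ < b) :
    HasDerivWithinAt (fun h => ∫ s in a..b, fracKernel β (b - s) *
        L (fracState α a y (needle u v τ h) s, u s, s))
      ⟪∫ s in τ..b, (fracKernel α (s - τ) * fracKernel β (b - s)) •
        gradient (fun z => L (z, u s, s)) (fracState α a y u s), v - u₀⟫ (Ioi 0) 0 := by
  have hτ : τ ∈ Icc a b := ⟨haτ, hτb.le⟩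
  have hsplit (h : ℝ) : ∫ s in a..b, fracKernel β (b - s) *
        L (fracState α a y (needle u v τ h) s, u s, s) =
      (∫ s in a..τ, fracKernel β (b - s) * L (fracState α a y u s, u s, s)) +
        ∫ s in τ..b, fracKernel β (b - s) * L (fracState α a y (needle u v τ h) s, u s, s) := by
    have hint {c d : ℝ} := intervalIntegrable_fracKernel_mul_lagrangian (c := c) (d := d) (y := y)
      hL.continuous hα hβ (memLp_top_needle hu v τ h) hu
    rw [← intervalIntegral.integral_add_adjacent_intervals (b := τ)
      (hint ⟨le_rfl, haτ.trans hτb.le⟩ hτ) (hint hτ ⟨haτ.trans hτb.le, le_rfl⟩)]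
    congr 1
    refine intervalIntegral.integral_congr_Ioo_of_le haτ fun s hs => ?_
    simp only [fracState_needle_of_le hs.1.le hs.2.le]
  simp only [hsplit]
  exact (hasDerivWithinAt_integral_lagrangian_needle_of_left hL hα hβ hu hLeb haτ hτb).const_add _

end Lagrangian

section BolzaCost

variable {E : Type*} [NormedAddCommGroup E]

/-- The Bolza functional of the control `w`: the endpoint cost `φ` of its state plus the
Riemann–Liouville integral of order `β` over `[a, b]` of the running cost `L`. -/
noncomputable def bolzaCost [NormedSpace ℝ E] (α β a b : ℝ) (y : E) (φ : E × E → ℝ)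
    (L : E × E × ℝ → ℝ) (w : ℝ → E) : ℝ :=
  φ (fracState α a y w a, fracState α a y w b) +
    ∫ s in a..b, fracKernel β (b - s) * L (fracState α a y w s, w s, s)

variable [ProperSpace E] {α β a b τ : ℝ} {y : E} {φ : E × E → ℝ} {L : E × E × ℝ → ℝ} {u : ℝ → E}

lemma bolzaCost_needle [NormedSpace ℝ E] (hL : Continuous L) (hα : 0 < α) (hβ : 0 < β)
    (hu : MemLp u ⊤ (volume.restrict (Icc a b))) (v : E) (haτ : a ≤ τ) {h : ℝ} (hh : 0 ≤ h)
    (hhb : τ + h ≤ b) :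
    bolzaCost α β a b y φ L (needle u v τ h) =
      φ (y, fracState α a y (needle u v τ h) b) +
      (∫ s in a..b, fracKernel β (b - s) * L (fracState α a y (needle u v τ h) s, u s, s)) +
      ∫ s in τ..τ + h, fracKernel β (b - s) * (L (fracState α a y (needle u v τ h) s, v, s) -
        L (fracState α a y (needle u v τ h) s, u s, s)) := by
  have hτb : τ ≤ b := by linarith
  have hneedle := memLp_top_needle hu v τ h
  have hint {w : ℝ → E} (hw : MemLp w ⊤ (volume.restrict (Icc a b))) :=
    intervalIntegrable_fracKernel_mul_lagrangian (y := y) hL hα hβ hneedle hw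
      ⟨le_rfl, haτ.trans hτb⟩ ⟨haτ.trans hτb, le_rfl⟩
  have hjump := integral_needle_sub (u := u) (v := v)
    (fun s z => fracKernel β (b - s) * L (fracState α a y (needle u v τ h) s, z, s)) haτ hτb hh
  simp only [min_eq_right hhb, ← mul_sub] at hjump
  simp only [bolzaCost, fracState_left, add_assoc]
  rw [← hjump]
  simp only [mul_sub]
  rw [intervalIntegral.integral_sub (hint hneedle) (hint hu), add_sub_cancel]

lemma hasDerivWithinAt_bolzaCost_needle [InnerProductSpace ℝ E] (hα : 0 < α) (hβ : 0 < β)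
    (hφ : DifferentiableAt ℝ (fun z => φ (y, z)) (fracState α a y u b)) (hL : ContDiff ℝ 1 L)
    (hu : MemLp u ⊤ (volume.restrict (Icc a b))) {u₀ : E}
    (hLeb : HasRightLebesgueLimit (fun _ => u) τ u₀) (haτ : a ≤ τ) (hτb : τ < b) (v : E) :
    HasDerivWithinAt (fun h => bolzaCost α β a b y φ L (needle u v τ h))
      (fracKernel β (b - τ) * (L (fracState α a y u τ, v, τ) - L (fracState α a y u τ, u₀, τ)) +
        ⟪fracKernel α (b - τ) • gradient (fun z => φ (y, z)) (fracState α a y u b) +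
          ∫ s in τ..b, (fracKernel α (s - τ) * fracKernel β (b - s)) •
            gradient (fun z => L (z, u s, s)) (fracState α a y u s), v - u₀⟫)
      (Ioi 0) 0 := by
  have hendpoint := hasDerivWithinAt_comp_gradient
    (γ := fun h => fracState α a y (needle u v τ h) b) (by rwa [needle_zero])
    (hasDerivWithinAt_fracState_needle hα hu hLeb haτ hτb le_rfl)
  rw [needle_zero, real_inner_smul_right, ← real_inner_smul_left] at hendpoint
  have hrunning := hasDerivWithinAt_integral_lagrangian_needle (v := v) (y := y)
    hL hα hβ hu hLeb haτ hτb
  have hjump := hasDerivWithinAt_integral_lagrangian_sub_lagrangian (β := β) (v := v) (y := y)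
    hL hα hu hLeb haτ hτb
  have hdecomp {h : ℝ} := bolzaCost_needle (φ := φ) (y := y) (h := h)
    hL.continuous hα hβ hu v haτ
  rw [inner_add_left, add_comm]
  refine ((hendpoint.add hrunning).add hjump).congr_of_eventuallyEq ?_
    (hdecomp le_rfl (by linarith))
  filter_upwards [eventually_pos_and_add_lt hτb] with h hh
  exact hdecomp hh.1.le hh.2.le

end BolzaCost

theorem stmt_17_general {E : Type*} [NormedAddCommGroup E] [InnerProductSpace ℝ E] [ProperSpace E]
    {α β a b τ : ℝ} (hα : 0 < α) (hβ : 0 < β) (haτ : a ≤ τ) (hτb : τ < b)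
    {φ : E × E → ℝ} {L : E × E × ℝ → ℝ} {u : ℝ → E} {y : E}
    (hφ : DifferentiableAt ℝ (fun z => φ (fracState α a y u a, z)) (fracState α a y u b))
    (hL : ContDiff ℝ 1 L) (hu : MemLp u ⊤ (volume.restrict (Icc a b)))
    (hLebu : Tendsto (fun h : ℝ => h⁻¹ * ∫ s in τ..τ + h, ‖u s - u τ‖) (𝓝[>] 0) (𝓝 0)) (v : E) :
    Tendsto (fun h : ℝ =>
        (bolzaCost α β a b y φ L (needle u v τ h) - bolzaCost α β a b y φ L u) / h)
      (𝓝[>] 0)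
      (𝓝 (fracKernel β (b - τ) *
          (L (fracState α a y u τ, v, τ) - L (fracState α a y u τ, u τ, τ)) +
        ⟪fracKernel α (b - τ) •
              gradient (fun z => φ (fracState α a y u a, z)) (fracState α a y u b) +
            ∫ s in τ..b, (fracKernel α (s - τ) * fracKernel β (b - s)) •
              gradient (fun z => L (z, u s, s)) (fracState α a y u s),
          v - u τ⟫)) := by
  have hint : ∀ᶠ h in 𝓝[>] (0 : ℝ), IntervalIntegrable u volume τ (τ + h) := by
    filter_upwards [eventually_pos_and_add_lt hτb] with h hh
    exact intervalIntegrable_of_memLp_top hu ⟨haτ, hτb.le⟩ ⟨by linarith, hh.2.le⟩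
  rw [fracState_left] at hφ ⊢
  have hderiv := hasDerivWithinAt_bolzaCost_needle hα hβ hφ hL hu ⟨hint, hLebu⟩ haτ hτb v
  simpa only [hasDerivWithinAt_Ioi_zero_iff_tendsto, needle_zero, smul_eq_mul,
    inv_mul_eq_div] using hderiv

theorem stmt_17 (n : ℕ) (hn : 1 ≤ n) (a b : ℝ) (hab : a < b)
    (α β : ℝ) (hα0 : 0 < α) (hα1 : α ≤ 1) (hβ : 0 < β) (R : ℝ) (hR : 0 ≤ R)
    (φ : EuclideanSpace ℝ (Fin n) × EuclideanSpace ℝ (Fin n) → ℝ)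
    (L : EuclideanSpace ℝ (Fin n) × EuclideanSpace ℝ (Fin n) × ℝ → ℝ)
    (hφ : ContDiff ℝ 2 φ) (hL : ContDiff ℝ 2 L)
    (u : ℝ → EuclideanSpace ℝ (Fin n)) (hum : Measurable u)
    (hub : ∀ᵐ s ∂(volume : Measure ℝ), s ∈ Icc a b → ‖u s‖ ≤ R)
    (y : EuclideanSpace ℝ (Fin n)) (x : ℝ → EuclideanSpace ℝ (Fin n))
    (hx : ∀ t, x t = y + ∫ s in a..t, ((t - s) ^ (α - 1) / Real.Gamma α) • u s)
    (τ : ℝ) (hτ : τ ∈ Ioo a b) (v : EuclideanSpace ℝ (Fin n)) (hv : ‖v‖ ≤ R)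
    (hLebu : Tendsto (fun h : ℝ => h⁻¹ * ∫ s in τ..(τ + h), ‖u s - u τ‖)
      (𝓝[>] (0 : ℝ)) (𝓝 0))
    (hLebL : Tendsto (fun h : ℝ => h⁻¹ * ∫ s in τ..(τ + h),
        |L (x s, u s, s) - L (x τ, u τ, τ)|) (𝓝[>] (0 : ℝ)) (𝓝 0))
    (Φ : (ℝ → EuclideanSpace ℝ (Fin n)) → ℝ)
    (hΦ : ∀ u' : ℝ → EuclideanSpace ℝ (Fin n),
      Φ u' = φ (y + ∫ s in a..a, ((a - s) ^ (α - 1) / Real.Gamma α) • u' s,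
                y + ∫ s in a..b, ((b - s) ^ (α - 1) / Real.Gamma α) • u' s) +
        ∫ s in a..b, ((b - s) ^ (β - 1) / Real.Gamma β) *
          L (y + ∫ r in a..s, ((s - r) ^ (α - 1) / Real.Gamma α) • u' r, u' s, s)) :
    Tendsto (fun h : ℝ =>
        (Φ (fun s => if τ ≤ s ∧ s < τ + h then v else u s) - Φ u) / h)
      (𝓝[>] (0 : ℝ))
      (𝓝 (((b - τ) ^ (β - 1) / Real.Gamma β) * (L (x τ, v, τ) - L (x τ, u τ, τ))
        + ⟪((b - τ) ^ (α - 1) / Real.Gamma α) • gradient (fun z => φ (x a, z)) (x b)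
            + ∫ s in τ..b, (((s - τ) ^ (α - 1) / Real.Gamma α) *
                ((b - s) ^ (β - 1) / Real.Gamma β)) •
              gradient (fun z => L (z, u s, s)) (x s),
          v - u τ⟫)) := by
  obtain rfl : x = fracState α a y u := funext hx
  obtain rfl : Φ = bolzaCost α β a b y φ L := funext hΦ
  exact stmt_17_general hα0 hβ hτ.1.le hτ.2
    ((hφ.differentiable two_ne_zero).comp (by fun_prop) _) (hL.of_le one_le_two)
    (memLp_top_of_bound hum.aestronglyMeasurable R ((ae_restrict_iff' measurableSet_Icc).2 hub))
    hLebu v
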